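/- Holomorphic–antiholomorphic conservation relation at the level of cycles: fix n ≥ 2. Then Asym( (−1)^{n−1}·ē₁·e₁·Π·∏_{a=1}^{n−1} A_a^{2a−1} − e₁²·∏_{a=1}^{n−1} A_a^{2a+1} ) ∈ K. -/

import Mathlib

open Finset Equiv

/-- The polynomial ring `ℂ[A₁,…,A_{n−1}, B₁,…,B_{2n}]`. -/
abbrev PolyRing (n : ℕ) := MvPolynomial (Fin (n - 1) ⊕ Fin (2 * n)) ℂ

/-- The field `F = ℂ(A₁,…,A_{n−1}, B₁,…,B_{2n})` of rational functions. -/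
abbrev RatField (n : ℕ) := FractionRing (PolyRing n)

/-- The variable `A_a` (indexed from `0`) inside `F`. -/
noncomputable def Av (n : ℕ) (a : Fin (n - 1)) : RatField n :=
  algebraMap (PolyRing n) (RatField n) (MvPolynomial.X (Sum.inl a))

/-- The variable `B_j` (indexed from `0`) inside `F`. -/
noncomputable def Bv (n : ℕ) (j : Fin (2 * n)) : RatField n :=
  algebraMap (PolyRing n) (RatField n) (MvPolynomial.X (Sum.inr j))

/-- The field automorphism of `F` substituting `A_a ↦ A_{σ(a)}` (fixing the `B`'s). -/
noncomputable def permA (n : ℕ) (σ : Equiv.Perm (Fin (n - 1))) :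
    RatField n ≃+* RatField n :=
  IsFractionRing.ringEquivOfRingEquiv
    ((MvPolynomial.renameEquiv ℂ (Equiv.sumCongr σ (Equiv.refl (Fin (2 * n))))).toRingEquiv)

/-- Antisymmetrization over the `A`-variables:
`Asym f := ∑_{σ ∈ S_{n−1}} sgn(σ)·f(A_{σ(1)},…,A_{σ(n−1)})`. -/
noncomputable def Asym (n : ℕ) (x : RatField n) : RatField n :=
  ∑ σ : Equiv.Perm (Fin (n - 1)), ((Equiv.Perm.sign σ : ℤ) : RatField n) * permA n σ x

/-- `Θ̂₊(x) := ∏_{j=1}^{2n}(1 + x·B_j⁻¹)`. -/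
noncomputable def ThetaP (n : ℕ) (x : RatField n) : RatField n :=
  ∏ j, (1 + x * (Bv n j)⁻¹)

/-- `Θ̂₋(x) := ∏_{j=1}^{2n}(1 − x·B_j⁻¹)`. -/
noncomputable def ThetaM (n : ℕ) (x : RatField n) : RatField n :=
  ∏ j, (1 - x * (Bv n j)⁻¹)

/-- `Ξ̂¹(x) := Θ̂₊(x) − Θ̂₋(x)`. -/
noncomputable def Xi1 (n : ℕ) (x : RatField n) : RatField n :=
  ThetaP n x - ThetaM n x

/-- `Ξ̂²(x,y) := (Θ̂₊(x)Θ̂₊(y) − Θ̂₋(x)Θ̂₋(y))·(x−y)/(x+y) + Θ̂₊(x)Θ̂₋(y) − Θ̂₋(x)Θ̂₊(y)`. -/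
noncomputable def Xi2 (n : ℕ) (x y : RatField n) : RatField n :=
  (ThetaP n x * ThetaP n y - ThetaM n x * ThetaM n y) * (x - y) / (x + y) +
    ThetaP n x * ThetaM n y - ThetaM n x * ThetaP n y

/-- The subfield `𝔹 = ℂ(B₁,…,B_{2n}) ⊆ F`. -/
noncomputable def BField (n : ℕ) : Subfield (RatField n) :=
  Subfield.closure
    (Set.range (fun c : ℂ => algebraMap (PolyRing n) (RatField n) (MvPolynomial.C c)) ∪
      Set.range (Bv n))

/-- The `𝔹`-submodule `K ⊆ F` spanned by the antisymmetrized deformed cycles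
`Asym(Ξ̂¹(A₁)·∏_{a=2}^{n−1} A_a^{r_a})` and
`Asym(Ξ̂²(A₁,A₂)·∏_{a=3}^{n−1} A_a^{r_a})` with `0 ≤ r_a ≤ 2n−1`. -/
noncomputable def Kspan (n : ℕ) : Submodule (BField n) (RatField n) :=
  Submodule.span (BField n)
    ({x | ∃ (h : 0 < n - 1) (r : Fin (n - 1) → ℕ), (∀ a, r a ≤ 2 * n - 1) ∧
        x = Asym n (Xi1 n (Av n ⟨0, h⟩) *
          ∏ a ∈ Finset.univ.filter (fun a : Fin (n - 1) => 0 < (a : ℕ)),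
            (Av n a) ^ (r a))} ∪
     {x | ∃ (h : 1 < n - 1) (r : Fin (n - 1) → ℕ), (∀ a, r a ≤ 2 * n - 1) ∧
        x = Asym n (Xi2 n (Av n ⟨0, by omega⟩) (Av n ⟨1, h⟩) *
          ∏ a ∈ Finset.univ.filter (fun a : Fin (n - 1) => 1 < (a : ℕ)),
            (Av n a) ^ (r a))})

/-- `e₁ = ∑_j B_j`. -/
noncomputable def eOne (n : ℕ) : RatField n := ∑ j, Bv n j

/-- `ē₁ = ∑_j B_j⁻¹`. -/
noncomputable def eBarOne (n : ℕ) : RatField n := ∑ j, (Bv n j)⁻¹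

/-- `Π = ∏_j B_j`. -/
noncomputable def PiB (n : ℕ) : RatField n := ∏ j, Bv n j

/-- The cycle `G_{μν} = (ē₁ − (−1)^ν·e₁)·((−1)^{μ+n}·Π·∏_{a=1}^{n−1} A_a^{2a−1}
  + ∏_{a=1}^{n−1} A_a^{2a+1})` of the energy–momentum tensor. -/
noncomputable def Gcyc (n : ℕ) (μ ν : Fin 2) : RatField n :=
  (eBarOne n - (-1 : RatField n) ^ (ν : ℕ) * eOne n) *
    ((-1 : RatField n) ^ ((μ : ℕ) + n) * PiB n *
        (∏ a : Fin (n - 1), (Av n a) ^ (2 * (a : ℕ) + 1)) +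
      ∏ a : Fin (n - 1), (Av n a) ^ (2 * (a : ℕ) + 3))

/-!
Writing `ē_k` for the elementary symmetric polynomials of the `B_j⁻¹`, the cycle `Ξ̂¹` is the odd
polynomial `2 ∑_{i < n} ē_{2i+1} A^{2i+1}`. In the generator
`Asym(Ξ̂¹(A₁)·A₂³A₃⁵⋯A_{n−1}^{2n−3})` each term whose exponent `2i+1` lies in `{3, 5, …, 2n−3}`
repeats an exponent and is killed by antisymmetrization. Only `A₁` and `A₁^{2n−1}` survive; in the
latter the exponent is moved to the last place by a cyclic permutation of sign `(−1)^n`. Since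
`Π·ē_{2n−1} = e₁`, multiplying by `(−1)^{n−1}·e₁·Π/2` gives the asserted element.
-/

section ElementarySymmetric

variable {ι : Type*}

lemma prod_one_add_mul_eq_sum_esymm {R : Type*} [CommSemiring R] (s : Finset ι) (f : ι → R)
    (x : R) :
    ∏ i ∈ s, (1 + x * f i) = ∑ k ∈ range (#s + 1), (s.val.map f).esymm k * x ^ k := by
  rw [prod_one_add, sum_powerset]
  refine sum_congr rfl fun k _ => ?_
  rw [esymm_map_val, sum_mul]
  refine sum_congr rfl fun t ht => ?_
  rw [prod_mul_distrib, prod_const, (mem_powersetCard.1 ht).2, mul_comm]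

lemma esymm_map_val_one {R : Type*} [CommSemiring R] (s : Finset ι) (f : ι → R) :
    (s.val.map f).esymm 1 = ∑ i ∈ s, f i := by
  simp [esymm_map_val, powersetCard_one]

lemma prod_mul_esymm_inv [Fintype ι] {K : Type*} [Semifield K] {f : ι → K} (hf : ∀ i, f i ≠ 0)
    {k l : ℕ} (hkl : k + l = Fintype.card ι) :
    (∏ i, f i) * (univ.val.map fun i => (f i)⁻¹).esymm k = (univ.val.map f).esymm l := by
  classical
  rw [esymm_map_val, esymm_map_val, mul_sum]
  have hcompl {p q : ℕ} (hpq : p + q = Fintype.card ι) (t : Finset ι)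
      (ht : t ∈ powersetCard p univ) : tᶜ ∈ powersetCard q univ := by
    rw [mem_powersetCard_univ] at ht ⊢
    rw [card_compl]
    omega
  refine sum_nbij' compl compl (hcompl hkl) (hcompl (add_comm k l ▸ hkl))
    (fun t _ => compl_compl t) (fun t _ => compl_compl t) fun t _ => ?_
  have hcancel : (∏ i ∈ t, f i) * ∏ i ∈ t, (f i)⁻¹ = 1 := by
    rw [← prod_mul_distrib]
    exact prod_eq_one fun i _ => mul_inv_cancel₀ (hf i)
  rw [← prod_mul_prod_compl t f, mul_right_comm, hcancel, one_mul]

end ElementarySymmetric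

lemma sum_mul_pow_sub_sum_mul_neg_pow {R : Type*} [CommRing R] (c : ℕ → R) (x : R) (n : ℕ) :
    ∑ k ∈ range (2 * n + 1), c k * x ^ k - ∑ k ∈ range (2 * n + 1), c k * (-x) ^ k =
      2 * ∑ i ∈ range n, c (2 * i + 1) * x ^ (2 * i + 1) := by
  induction n with
  | zero => simp
  | succ n ih =>
    have hodd : (-x) ^ (2 * n + 1) = -x ^ (2 * n + 1) := Odd.neg_pow ⟨n, rfl⟩ x
    have heven : (-x) ^ (2 * n + 2) = x ^ (2 * n + 2) := Even.neg_pow ⟨n + 1, by ring⟩ x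
    rw [show 2 * (n + 1) + 1 = 2 * n + 1 + 1 + 1 by ring, sum_range_succ _ (2 * n + 1 + 1),
      sum_range_succ _ (2 * n + 1), sum_range_succ _ (2 * n + 1 + 1),
      sum_range_succ _ (2 * n + 1), sum_range_succ _ n, hodd, heven]
    linear_combination ih

lemma update_zero_finRotate {α : Type*} {N : ℕ} (hN : 0 < N) (f : ℕ → α) (a : Fin N) :
    Function.update (fun b : Fin N => f b) ⟨0, hN⟩ (f N) (finRotate N a) = f (a + 1) := by
  obtain ⟨m, rfl⟩ := Nat.exists_eq_succ_of_ne_zero hN.ne'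
  by_cases ha : a = Fin.last m
  · subst ha
    rw [finRotate_last]
    exact Function.update_self ..
  · have hval : (finRotate (m + 1) a : ℕ) = a + 1 := coe_finRotate_of_ne_last ha
    have hne : finRotate (m + 1) a ≠ ⟨0, hN⟩ := fun h => by simp [h] at hval
    rw [Function.update_of_ne hne, hval]

lemma pow_mul_prod_filter_pos_pow {M : Type*} [CommMonoid M] {N : ℕ} (hN : 0 < N)
    (x : Fin N → M) (r : Fin N → ℕ) (k : ℕ) :
    x ⟨0, hN⟩ ^ k * ∏ a ∈ univ.filter (fun a : Fin N => 0 < (a : ℕ)), x a ^ r a =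
      ∏ a, x a ^ Function.update r ⟨0, hN⟩ k a := by
  have hfilter : univ.filter (fun a : Fin N => 0 < (a : ℕ)) = univ.erase ⟨0, hN⟩ := by
    ext a
    simp [Fin.ext_iff, Nat.pos_iff_ne_zero]
  rw [← mul_prod_erase univ _ (mem_univ (⟨0, hN⟩ : Fin N)), Function.update_self, hfilter]
  congr 1
  refine prod_congr rfl fun a ha => ?_
  rw [Function.update_of_ne (ne_of_mem_erase ha)]

section Variables

variable {n : ℕ}

lemma permA_Av (σ : Perm (Fin (n - 1))) (a : Fin (n - 1)) :
    permA n σ (Av n a) = Av n (σ a) := by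
  rw [permA, Av, IsFractionRing.ringEquivOfRingEquiv_algebraMap]
  exact congrArg _ (MvPolynomial.rename_X _ _)

lemma permA_Bv (σ : Perm (Fin (n - 1))) (j : Fin (2 * n)) :
    permA n σ (Bv n j) = Bv n j := by
  rw [permA, Bv, IsFractionRing.ringEquivOfRingEquiv_algebraMap]
  exact congrArg _ (MvPolynomial.rename_X _ _)

lemma permA_C (σ : Perm (Fin (n - 1))) (c : ℂ) :
    permA n σ (algebraMap (PolyRing n) (RatField n) (MvPolynomial.C c)) =
      algebraMap (PolyRing n) (RatField n) (MvPolynomial.C c) := by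
  rw [permA, IsFractionRing.ringEquivOfRingEquiv_algebraMap]
  exact congrArg _ (MvPolynomial.rename_C _ _)

lemma permA_of_mem_BField (σ : Perm (Fin (n - 1))) {c : RatField n} (hc : c ∈ BField n) :
    permA n σ c = c := by
  refine RingHom.eqOn_field_closure (f := (permA n σ : RatField n →+* RatField n))
    (g := RingHom.id _) ?_ hc
  rintro _ (⟨z, rfl⟩ | ⟨j, rfl⟩)
  exacts [permA_C σ z, permA_Bv σ j]

lemma Bv_ne_zero (j : Fin (2 * n)) : Bv n j ≠ 0 := by
  rw [Bv, Ne, IsFractionRing.to_map_eq_zero_iff]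
  exact MvPolynomial.X_ne_zero _

lemma Bv_mem_BField (j : Fin (2 * n)) : Bv n j ∈ BField n :=
  Subfield.subset_closure (Or.inr ⟨j, rfl⟩)

lemma eOne_mem_BField : eOne n ∈ BField n := sum_mem fun j _ => Bv_mem_BField j

lemma eBarOne_mem_BField : eBarOne n ∈ BField n :=
  sum_mem fun j _ => inv_mem (Bv_mem_BField j)

lemma PiB_mem_BField : PiB n ∈ BField n := prod_mem fun j _ => Bv_mem_BField j

end Variables

section Antisymmetrization

variable {n : ℕ}

/-- Antisymmetrization over the `A`-variables as a `𝔹`-linear endomorphism of `F`,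
so that the linearity lemmas of the library apply to `Asym`. -/
noncomputable def asymLinear (n : ℕ) : RatField n →ₗ[BField n] RatField n where
  toFun := Asym n
  map_add' x y := by simp only [Asym, map_add, mul_add, sum_add_distrib]
  map_smul' c x := by
    simp only [Asym, Subfield.smul_def, smul_eq_mul, map_mul, permA_of_mem_BField _ c.2, mul_sum,
      RingHom.id_apply, mul_left_comm]

lemma Asym_sub (x y : RatField n) : Asym n (x - y) = Asym n x - Asym n y :=
  map_sub (asymLinear n) x y

lemma Asym_sum {ι : Type*} (s : Finset ι) (f : ι → RatField n) :
    Asym n (∑ i ∈ s, f i) = ∑ i ∈ s, Asym n (f i) :=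
  map_sum (asymLinear n) f s

lemma Asym_mul_of_mem_BField {c : RatField n} (hc : c ∈ BField n) (x : RatField n) :
    Asym n (c * x) = c * Asym n x :=
  map_smul (asymLinear n) (⟨c, hc⟩ : BField n) x

lemma Asym_prod_pow_eq_det (r : Fin (n - 1) → ℕ) :
    Asym n (∏ a, Av n a ^ r a) = (Matrix.of fun i a => Av n i ^ r a).det := by
  simp only [Asym, Matrix.det_apply', map_prod, map_pow, permA_Av, Matrix.of_apply]

lemma Asym_prod_pow_eq_zero_of_eq {r : Fin (n - 1) → ℕ} {a b : Fin (n - 1)} (hab : a ≠ b)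
    (hr : r a = r b) : Asym n (∏ c, Av n c ^ r c) = 0 := by
  rw [Asym_prod_pow_eq_det]
  exact Matrix.det_zero_of_column_eq hab fun i => by simp only [Matrix.of_apply, hr]

lemma Asym_prod_pow_comp_perm (τ : Perm (Fin (n - 1))) (r : Fin (n - 1) → ℕ) :
    Asym n (∏ a, Av n a ^ r (τ a)) =
      ((Perm.sign τ : ℤ) : RatField n) * Asym n (∏ a, Av n a ^ r a) := by
  rw [Asym_prod_pow_eq_det, Asym_prod_pow_eq_det, ← Matrix.det_permute']
  rfl

lemma Asym_prod_pow_update_zero (h : 0 < n - 1) (f : ℕ → ℕ) :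
    Asym n (∏ a, Av n a ^ Function.update (fun b : Fin (n - 1) => f b) ⟨0, h⟩ (f (n - 1)) a) =
      (-1) ^ n * Asym n (∏ a : Fin (n - 1), Av n a ^ f (a + 1)) := by
  have hrot := Asym_prod_pow_comp_perm (finRotate (n - 1))
    (Function.update (fun b : Fin (n - 1) => f b) ⟨0, h⟩ (f (n - 1)))
  simp only [update_zero_finRotate, sign_finRotate, Units.val_pow_eq_pow_val, Units.val_neg,
    Units.val_one, Int.cast_pow, Int.cast_neg, Int.cast_one] at hrot
  have hsign : (-1 : RatField n) ^ n * (-1) ^ (n - 1 - 1) = 1 := by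
    rw [← pow_add]
    exact Even.neg_one_pow ⟨n - 1, by omega⟩
  rw [hrot, ← mul_assoc, hsign, one_mul]

end Antisymmetrization

section Cycle

variable {n : ℕ}

/-- The elementary symmetric polynomial `ē_k` of the inverses `B_j⁻¹`: the coefficient of `A^k`
in `Θ̂₊(A)`. -/
noncomputable def esymmInvB (n k : ℕ) : RatField n :=
  (univ.val.map fun j => (Bv n j)⁻¹).esymm k

lemma esymmInvB_mem_BField (k : ℕ) : esymmInvB n k ∈ BField n := by
  rw [esymmInvB, esymm_map_val]
  exact sum_mem fun t _ => prod_mem fun j _ => inv_mem (Bv_mem_BField j)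

lemma esymmInvB_one : esymmInvB n 1 = eBarOne n := esymm_map_val_one _ _

lemma PiB_mul_esymmInvB_of_succ_eq {k : ℕ} (hk : k + 1 = 2 * n) :
    PiB n * esymmInvB n k = eOne n := by
  rw [PiB, esymmInvB, prod_mul_esymm_inv Bv_ne_zero (l := 1) (by rw [Fintype.card_fin, hk]),
    esymm_map_val_one, eOne]

lemma ThetaP_eq_sum (x : RatField n) :
    ThetaP n x = ∑ k ∈ range (2 * n + 1), esymmInvB n k * x ^ k := by
  rw [ThetaP, prod_one_add_mul_eq_sum_esymm, card_univ, Fintype.card_fin]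
  rfl

lemma ThetaM_eq_ThetaP_neg (x : RatField n) : ThetaM n x = ThetaP n (-x) := by
  simp only [ThetaM, ThetaP, neg_mul, sub_eq_add_neg]

lemma Xi1_eq_sum_odd (x : RatField n) :
    Xi1 n x = 2 * ∑ i ∈ range n, esymmInvB n (2 * i + 1) * x ^ (2 * i + 1) := by
  rw [Xi1, ThetaM_eq_ThetaP_neg, ThetaP_eq_sum, ThetaP_eq_sum, sum_mul_pow_sub_sum_mul_neg_pow]

lemma Asym_Xi1_mul_prod_pow (h : 0 < n - 1) (r : Fin (n - 1) → ℕ) :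
    Asym n (Xi1 n (Av n ⟨0, h⟩) *
        ∏ a ∈ univ.filter (fun a : Fin (n - 1) => 0 < (a : ℕ)), Av n a ^ r a) =
      2 * ∑ i ∈ range n, esymmInvB n (2 * i + 1) *
        Asym n (∏ a, Av n a ^ Function.update r ⟨0, h⟩ (2 * i + 1) a) := by
  rw [Xi1_eq_sum_odd, mul_assoc, Asym_mul_of_mem_BField (ofNat_mem _ 2), sum_mul, Asym_sum]
  congr 1
  refine sum_congr rfl fun i _ => ?_
  rw [mul_assoc, pow_mul_prod_filter_pos_pow, Asym_mul_of_mem_BField (esymmInvB_mem_BField _)]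

lemma Asym_Xi1_mul_prod_odd_pow (h : 0 < n - 1) :
    Asym n (Xi1 n (Av n ⟨0, h⟩) *
        ∏ a ∈ univ.filter (fun a : Fin (n - 1) => 0 < (a : ℕ)), Av n a ^ (2 * (a : ℕ) + 1)) =
      2 * (eBarOne n * Asym n (∏ a : Fin (n - 1), Av n a ^ (2 * (a : ℕ) + 1)) +
        (-1) ^ n * esymmInvB n (2 * (n - 1) + 1) *
          Asym n (∏ a : Fin (n - 1), Av n a ^ (2 * (a : ℕ) + 3))) := by
  rw [Asym_Xi1_mul_prod_pow h fun a => 2 * (a : ℕ) + 1]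
  congr 1
  rw [sum_eq_add_of_mem 0 (n - 1) (mem_range.2 (by omega)) (mem_range.2 (by omega)) h.ne]
  · have hfirst : Function.update (fun a : Fin (n - 1) => 2 * (a : ℕ) + 1) ⟨0, h⟩ (2 * 0 + 1) =
        fun a : Fin (n - 1) => 2 * (a : ℕ) + 1 := Function.update_eq_self ..
    have hlast : Asym n (∏ a, Av n a ^ Function.update (fun b : Fin (n - 1) => 2 * (b : ℕ) + 1)
        ⟨0, h⟩ (2 * (n - 1) + 1) a) =
          (-1) ^ n * Asym n (∏ a : Fin (n - 1), Av n a ^ (2 * (a : ℕ) + 3)) :=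
      Asym_prod_pow_update_zero h fun b => 2 * b + 1
    rw [hfirst, hlast, mul_zero, zero_add, esymmInvB_one]
    ring
  · rintro i hi ⟨hi0, hilast⟩
    have hlt : i < n - 1 := by
      have := mem_range.1 hi
      omega
    have hne : (⟨0, h⟩ : Fin (n - 1)) ≠ ⟨i, hlt⟩ := fun h => hi0 (Fin.val_eq_of_eq h).symm
    rw [Asym_prod_pow_eq_zero_of_eq hne, mul_zero]
    rw [Function.update_self, Function.update_of_ne hne.symm]

lemma PiB_mul_Asym_Xi1_mul_prod_odd_pow (h : 0 < n - 1) :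
    PiB n * Asym n (Xi1 n (Av n ⟨0, h⟩) *
        ∏ a ∈ univ.filter (fun a : Fin (n - 1) => 0 < (a : ℕ)), Av n a ^ (2 * (a : ℕ) + 1)) =
      2 * (eBarOne n * PiB n * Asym n (∏ a : Fin (n - 1), Av n a ^ (2 * (a : ℕ) + 1)) +
        (-1) ^ n * eOne n * Asym n (∏ a : Fin (n - 1), Av n a ^ (2 * (a : ℕ) + 3))) := by
  have htop : PiB n * esymmInvB n (2 * (n - 1) + 1) = eOne n :=
    PiB_mul_esymmInvB_of_succ_eq (by omega)
  rw [Asym_Xi1_mul_prod_odd_pow, ← htop]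
  ring

lemma Asym_Xi1_mul_prod_pow_mem_Kspan (h : 0 < n - 1) {r : Fin (n - 1) → ℕ}
    (hr : ∀ a, r a ≤ 2 * n - 1) :
    Asym n (Xi1 n (Av n ⟨0, h⟩) *
      ∏ a ∈ univ.filter (fun a : Fin (n - 1) => 0 < (a : ℕ)), Av n a ^ r a) ∈ Kspan n :=
  Submodule.subset_span (Or.inl ⟨h, r, hr, rfl⟩)

lemma mul_mem_Kspan {c x : RatField n} (hc : c ∈ BField n) (hx : x ∈ Kspan n) :
    c * x ∈ Kspan n :=
  (Kspan n).smul_mem (⟨c, hc⟩ : BField n) hx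

end Cycle

/-- Holomorphic–antiholomorphic conservation relation at the level of cycles:
for `n ≥ 2`,
`Asym((−1)^{n−1}·ē₁·e₁·Π·∏_{a=1}^{n−1} A_a^{2a−1} − e₁²·∏_{a=1}^{n−1} A_a^{2a+1}) ∈ K`. -/
theorem holo_antiholo_conservation (n : ℕ) (hn : 2 ≤ n) :
    Asym n ((-1 : RatField n) ^ (n - 1) * eBarOne n * eOne n * PiB n *
        (∏ a : Fin (n - 1), (Av n a) ^ (2 * (a : ℕ) + 1)) -
      (eOne n) ^ 2 * ∏ a : Fin (n - 1), (Av n a) ^ (2 * (a : ℕ) + 3)) ∈ Kspan n := by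
  have h : 0 < n - 1 := by omega
  have hsign : (-1 : RatField n) ^ (n - 1) ∈ BField n := pow_mem (neg_mem (one_mem _)) _
  have hcoeff : (-1 : RatField n) ^ (n - 1) * eOne n / 2 ∈ BField n :=
    div_mem (mul_mem hsign eOne_mem_BField) (ofNat_mem _ 2)
  have hgen := mul_mem_Kspan hcoeff <| mul_mem_Kspan PiB_mem_BField <|
    Asym_Xi1_mul_prod_pow_mem_Kspan h (r := fun a => 2 * (a : ℕ) + 1) fun a => by omega
  have hodd : (-1 : RatField n) ^ (n - 1) * (-1) ^ n = -1 := by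
    rw [← pow_add]
    exact Odd.neg_one_pow ⟨n - 1, by omega⟩
  rw [PiB_mul_Asym_Xi1_mul_prod_odd_pow] at hgen
  rw [Asym_sub, Asym_mul_of_mem_BField (mul_mem (mul_mem (mul_mem hsign eBarOne_mem_BField)
    eOne_mem_BField) PiB_mem_BField), Asym_mul_of_mem_BField (pow_mem eOne_mem_BField 2)]
  convert hgen using 1
  linear_combination (-eOne n ^ 2 *
    Asym n (∏ a : Fin (n - 1), Av n a ^ (2 * (a : ℕ) + 3))) * hodd
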